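/- arXiv:1501.06452 — 2 statements merged into one kernel-verified Lean document; each statement's English description precedes it below -/
import Mathlib

section
/- Let X be a sequential topological space that is sequentially Hausdorff and hereditarily Lindelöf. Then for every nonempty Scott-open set H ⊆ O(X), the intersection ⋂H is compact. -/
/-!
Let `K = ⋂ H`. In a hereditarily Lindelöf space every countably compact set is compact, and a
sequentially compact set is countably compact, so it suffices that `K` is sequentially compact.

Let `x` be a sequence in `K` and let `U ∈ H`. If no subsequence of `x` converged to a point of `U`,
then each `U \ {x n | n ≥ m}` would be open (`isOpen_diff_tail`; this uses that `X` is sequential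
and T₁), and these sets would increase with `m` and exhaust `U`. By Scott openness one of them
would belong to `H`, hence contain `K`, although it misses `x m ∈ K`. So `x` has a subsequence
converging in `U` (`exists_subseq_tendsto_mem`).

Applying this with some `U ∈ H` gives a subsequence converging to a point `a`. Applying it again to
that subsequence and an arbitrary `V ∈ H` gives a limit in `V`, which is `a` by uniqueness of
limits. Hence `a ∈ K`.
-/

open TopologicalSpace Filter Set

/-- A subset `H` of a complete lattice is **ω-Scott open** if it is upward closed and every
nonempty countable directed family `D` whose supremum belongs to `H` meets `H`. -/
def OmegaScottOpen {L : Type*} [CompleteLattice L] (H : Set L) : Prop :=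
  (∀ ⦃U V : L⦄, U ∈ H → U ≤ V → V ∈ H) ∧
  ∀ D : Set L, D.Nonempty → D.Countable → DirectedOn (· ≤ ·) D → sSup D ∈ H →
    (D ∩ H).Nonempty

/-- A subset `H` of a complete lattice is **Scott open** if it is upward closed and every
nonempty directed family `D` whose supremum belongs to `H` meets `H`. -/
def ScottOpen {L : Type*} [CompleteLattice L] (H : Set L) : Prop :=
  (∀ ⦃U V : L⦄, U ∈ H → U ≤ V → V ∈ H) ∧
  ∀ D : Set L, D.Nonempty → DirectedOn (· ≤ ·) D → sSup D ∈ H → (D ∩ H).Nonempty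

/-- The ω-Scott topology on a complete lattice: the collection of ω-Scott open sets (these form a
topology, so it coincides with the topology they generate). -/
def omegaScottTopology (L : Type*) [CompleteLattice L] : TopologicalSpace L :=
  .generateFrom {H | OmegaScottOpen H}

/-- The Scott topology on a complete lattice. -/
def scottTopology' (L : Type*) [CompleteLattice L] : TopologicalSpace L :=
  .generateFrom {H | ScottOpen H}

/-- A set `K` is countably compact if every countable open cover of `K` has a finite subcover. -/
def CountablyCompactSet {X : Type*} [TopologicalSpace X] (K : Set X) : Prop :=
  ∀ C : Set (Set X), C.Countable → (∀ c ∈ C, IsOpen c) → K ⊆ ⋃₀ C →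
    ∃ F ⊆ C, F.Finite ∧ K ⊆ ⋃₀ F

/-- The compact-open topology on the lattice of opens of `X`, generated by the sets
`K^⊆ = {U | K ⊆ U}` for `K` compact. -/
def coTopology (X : Type*) [TopologicalSpace X] : TopologicalSpace (Opens X) :=
  .generateFrom {H | ∃ K : Set X, IsCompact K ∧ H = {U : Opens X | K ⊆ (U : Set X)}}

/-- The countably-compact-open topology on the lattice of opens of `X`. -/
def ccoTopology (X : Type*) [TopologicalSpace X] : TopologicalSpace (Opens X) :=
  .generateFrom
    {H | ∃ K : Set X, CountablyCompactSet K ∧ H = {U : Opens X | K ⊆ (U : Set X)}}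

/-- A topological space is sequentially Hausdorff if limits of sequences are unique. -/
def SeqHausdorff (X : Type*) [TopologicalSpace X] : Prop :=
  ∀ (x : ℕ → X) (a b : X), Tendsto x atTop (nhds a) → Tendsto x atTop (nhds b) → a = b

/-- `OO X` is the lattice of ω-Scott open subsets of `O(X)`, i.e. the opens of `O(X)`. -/
def OO (X : Type*) [TopologicalSpace X] : Type _ := {H : Set (Opens X) // OmegaScottOpen H}

namespace OO

variable {X : Type*} [TopologicalSpace X]

lemma omegaScottOpen_sUnion {S : Set (Set (Opens X))} (hS : ∀ s ∈ S, OmegaScottOpen s) :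
    OmegaScottOpen (⋃₀ S) := by
  constructor
  · rintro U V ⟨s, hs, hU⟩ hUV
    exact ⟨s, hs, (hS s hs).1 hU hUV⟩
  · rintro D hne hcnt hdir hsup
    obtain ⟨s, hs, hU⟩ := hsup
    obtain ⟨d, hdD, hds⟩ := (hS s hs).2 D hne hcnt hdir hU
    exact ⟨d, hdD, s, hs, hds⟩

instance : PartialOrder (OO X) := Subtype.partialOrder _

instance : SupSet (OO X) :=
  ⟨fun s => ⟨⋃₀ (Subtype.val '' s),
    omegaScottOpen_sUnion (by rintro _ ⟨a, _, rfl⟩; exact a.2)⟩⟩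

/-- `OO X`, ordered by inclusion, is a complete lattice (suprema are unions). -/
noncomputable instance : CompleteLattice (OO X) :=
  completeLatticeOfSup _ fun s => by
    constructor
    · intro a ha U hU
      exact ⟨a.1, ⟨a, ha, rfl⟩, hU⟩
    · intro b hb U hU
      obtain ⟨_, ⟨a, ha, rfl⟩, hUa⟩ := hU
      exact hb ha hUa

end OO

/-- `e K` is the collection of open sets containing `K`. -/
def eOpens {X : Type*} [TopologicalSpace X] (K : Set X) : Set (Opens X) :=
  {U : Opens X | K ⊆ (U : Set X)}

lemma exists_upper_of_directedOn {L : Type*} [Preorder L] {D : Set L}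
    (hne : D.Nonempty) (hdir : DirectedOn (· ≤ ·) D) (s : Finset L) (hs : ↑s ⊆ D) :
    ∃ d ∈ D, ∀ U ∈ s, U ≤ d := by
  classical
  induction s using Finset.induction_on with
  | empty => exact ⟨hne.choose, hne.choose_spec, by simp⟩
  | @insert a t ha ih =>
      obtain ⟨d, hd, hdt⟩ := ih (fun x hx => hs (by simp [hx]))
      obtain ⟨e, he, hae, hde⟩ := hdir a (hs (by simp)) d hd
      refine ⟨e, he, ?_⟩
      intro U hU
      rcases Finset.mem_insert.1 hU with rfl | hU
      · exact hae
      · exact (hdt U hU).trans hde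

/-- For a countably compact set `K`, the collection `e K` is ω-Scott open. -/
lemma omegaScottOpen_eOpens {X : Type*} [TopologicalSpace X] {K : Set X}
    (hK : CountablyCompactSet K) : OmegaScottOpen (eOpens K) := by
  classical
  constructor
  · intro U V hU hUV x hx
    exact hUV (hU hx)
  · rintro D hne hcnt hdir hsup
    have hcover : K ⊆ ⋃₀ ((fun U : Opens X => (U : Set X)) '' D) := by
      intro x hx
      have hx' : x ∈ sSup D := hsup hx
      obtain ⟨U, hU, hxU⟩ := Opens.mem_sSup.1 hx'
      exact ⟨(U : Set X), mem_image_of_mem _ hU, hxU⟩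
    obtain ⟨F, hFsub, hFfin, hKF⟩ := hK _ (hcnt.image _)
      (by rintro _ ⟨U, _, rfl⟩; exact U.2) hcover
    obtain ⟨F₀, hF₀D, hF₀⟩ := Set.subset_image_iff.mp hFsub
    have hF₀fin : F₀.Finite :=
      Set.Finite.of_finite_image (hF₀.symm ▸ hFfin) SetLike.coe_injective.injOn
    obtain ⟨d, hd, hdub⟩ := exists_upper_of_directedOn hne hdir hF₀fin.toFinset
      (by simpa using hF₀D)
    refine ⟨d, hd, ?_⟩
    intro x hx
    obtain ⟨c, hcF, hxc⟩ := hKF hx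
    rw [← hF₀] at hcF
    obtain ⟨U, hU, rfl⟩ := hcF
    exact hdub U (hF₀fin.mem_toFinset.2 hU) hxc

lemma SeqHausdorff.t1Space {X : Type*} [TopologicalSpace X] (hX : SeqHausdorff X) :
    T1Space X := by
  rw [t1Space_iff_specializes_imp_eq]
  intro a b hab
  -- `a ⤳ b` means that the constant sequence `a` converges to `b`
  exact hX (fun _ => a) a b tendsto_const_nhds
    (tendsto_const_nhds.mono_right hab)

/-- If no subsequence of `x` converges to a point of the open set `U`, then removing a tail of `x`
from `U` leaves an open set. -/
lemma isOpen_diff_tail {X : Type*} [TopologicalSpace X] [SequentialSpace X] [T1Space X]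
    {U : Set X} (hU : IsOpen U) (x : ℕ → X)
    (hx : ∀ φ : ℕ → ℕ, StrictMono φ → ∀ a ∈ U, ¬ Tendsto (x ∘ φ) atTop (nhds a)) (m : ℕ) :
    IsOpen (U \ x '' Ici m) := by
  rw [← isClosed_compl_iff, ← isSeqClosed_iff_isClosed]
  rintro y u hy hyu ⟨huU, hum⟩
  have hev : ∀ᶠ k in atTop, ∃ n, m ≤ n ∧ x n = y k := by
    filter_upwards [hyu.eventually (hU.mem_nhds huU)] with k hk
    by_contra hcon
    exact hy k ⟨hk, hcon⟩
  have hch : ∀ k, ∃ n, (∃ n, m ≤ n ∧ x n = y k) → m ≤ n ∧ x n = y k := fun k => by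
    by_cases h : ∃ n, m ≤ n ∧ x n = y k
    · exact ⟨h.choose, fun _ => h.choose_spec⟩
    · exact ⟨0, fun h' => absurd h' h⟩
  choose n hn using hch
  have hev' : ∀ᶠ k in atTop, m ≤ n k ∧ x (n k) = y k := hev.mono hn
  by_cases hlim : Tendsto n atTop atTop
  · -- the indices tend to infinity: a subsequence of `y` is also a subsequence of `x`
    obtain ⟨φ, hφ, hnφ⟩ := strictMono_subseq_of_tendsto_atTop hlim
    refine hx _ hnφ u huU ((hyu.comp hφ.tendsto_atTop).congr' ?_)
    filter_upwards [hφ.tendsto_atTop.eventually hev'] with k hk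
    exact hk.2.symm
  · -- otherwise `y` is frequently in a finite, hence closed, part of the tail
    rw [tendsto_atTop] at hlim
    push Not at hlim
    obtain ⟨b, hb⟩ := hlim
    have hfin : (x '' Icc m b).Finite := (finite_Icc m b).image x
    have hmem : u ∈ x '' Icc m b := by
      refine hfin.isClosed.mem_of_frequently_of_tendsto ?_ hyu
      refine (hb.and_eventually hev').mono ?_
      rintro k ⟨hkb, hkm, hk⟩
      exact ⟨n k, ⟨hkm, by omega⟩, hk⟩
    exact hum (image_mono Icc_subset_Ici_self hmem)

lemma exists_subseq_tendsto_mem {X : Type*} [TopologicalSpace X] [SequentialSpace X] [T1Space X]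
    {H : Set (Opens X)} (hH : ScottOpen H) {U : Opens X} (hU : U ∈ H) (x : ℕ → X)
    (hxH : ∀ n, ∀ V ∈ H, x n ∈ V) :
    ∃ a ∈ U, ∃ φ : ℕ → ℕ, StrictMono φ ∧ Tendsto (x ∘ φ) atTop (nhds a) := by
  by_contra hcon
  have hx : ∀ φ : ℕ → ℕ, StrictMono φ → ∀ a ∈ (U : Set X), ¬ Tendsto (x ∘ φ) atTop (nhds a) :=
    fun φ hφ a ha h => hcon ⟨a, ha, φ, hφ, h⟩
  let W : ℕ → Opens X := fun m => ⟨U \ x '' Ici m, isOpen_diff_tail U.2 x hx m⟩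
  have hW : Monotone W := fun i j hij =>
    sdiff_subset_sdiff_right (image_mono (Ici_subset_Ici.2 hij))
  have hsup : U ≤ sSup (range W) := by
    intro p hp
    rw [Opens.mem_sSup]
    by_contra hno
    -- a point lying in every tail is the limit of a constant subsequence
    have hfreq : ∃ᶠ k in atTop, x k = p := by
      rw [frequently_atTop]
      intro m
      by_contra hm
      refine hno ⟨W m, mem_range_self m, hp, ?_⟩
      rintro ⟨k, hk, hkp⟩
      exact hm ⟨k, hk, hkp⟩
    obtain ⟨φ, hφ, hφp⟩ := extraction_of_frequently_atTop hfreq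
    exact hx φ hφ p hp (tendsto_const_nhds.congr fun k => (hφp k).symm)
  obtain ⟨_, ⟨m, rfl⟩, hm⟩ := hH.2 (range W) (range_nonempty W)
    (directedOn_range.2 hW.directed_le) (hH.1 hU hsup)
  exact (hxH m _ hm).2 ⟨m, self_mem_Ici, rfl⟩

/-- In a hereditarily Lindelöf sequentially Hausdorff sequential space, the
intersection of every nonempty Scott-open collection of opens is compact. -/
theorem statement18 {X : Type*} [TopologicalSpace X] [SequentialSpace X]
    [HereditarilyLindelofSpace X] (hX : SeqHausdorff X)
    (H : Set (Opens X)) (hH : ScottOpen H) (hne : H.Nonempty) :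
    IsCompact (⋂ U ∈ H, (U : Set X)) := by
  have := hX.t1Space
  refine IsCountablyCompact.isCompact (IsSeqCompact.isCountablyCompact ?_)
  intro x hx
  have hxH : ∀ n, ∀ V ∈ H, x n ∈ V := fun n V hV => mem_iInter₂.1 (hx n) V hV
  obtain ⟨U, hU⟩ := hne
  obtain ⟨a, -, φ, hφ, ha⟩ := exists_subseq_tendsto_mem hH hU x hxH
  refine ⟨a, mem_iInter₂.2 fun V hV => ?_, φ, hφ, ha⟩
  obtain ⟨b, hb, ψ, hψ, hbl⟩ :=
    exists_subseq_tendsto_mem hH hV (x ∘ φ) fun n => hxH (φ n)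
  rw [hX _ a b (ha.comp hψ.tendsto_atTop) hbl]
  exact hb
end

section
/- Let X be the topological space with underlying set ℕ ⊕ Bool whose topology is generated by the sets {Sum.inl n} for n ∈ ℕ together with the sets B(n,i) = {Sum.inl a | a ≥ n} ∪ {Sum.inr i} for n ∈ ℕ and i ∈ Bool. Let H = {U ∈ O(X) | {Sum.inl a | a ∈ ℕ} ∪ {Sum.inr true} ⊆ U} ∪ {U ∈ O(X) | {Sum.inl a | a ∈ ℕ} ∪ {Sum.inr false} ⊆ U}. Then X is a T1, second-countable, locally compact space, H is a nonempty ω-Scott open subset of O(X), ⋂H = {Sum.inl a | a ∈ ℕ}, and ⋂H is not countably compact. (Hence sequential Hausdorffness is essential for the countable compactness of ⋂H.) -/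
/-!
`XS` is `ℕ` with two points at infinity. The topology is described pointwise
(`XS.isOpen_iff`): a set is open iff it contains a tail of `ℕ` as soon as it contains one of the
points at infinity. Hence each basic set `B(n,i)` is compact (`XS.isCompact_tail`): an open set
containing `∞ᵢ` misses only finitely many of its points. This gives local compactness, and it shows
that `Hex = e B(0,true) ∪ e B(0,false)` is a union of two ω-Scott open sets
(`omegaScottOpen_eOpens`). Both `B(0,true)` and `B(0,false)` are members of `Hex` and every member
contains `ℕ`, so `⋂ Hex = ℕ`; this is an infinite set of isolated points, whose cover by singletons
has no finite subcover.
-/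

open TopologicalSpace Filter Set

/-- The underlying set of the counterexample space: `ℕ ⊕ Bool`. -/
def XS : Type := ℕ ⊕ Bool

/-- The inclusion of `ℕ` into `XS`. -/
def XS.inl (n : ℕ) : XS := Sum.inl n

/-- The inclusion of `Bool` into `XS`. -/
def XS.inr (b : Bool) : XS := Sum.inr b

/-- The topology on `XS` generated by the singletons `{Sum.inl n}` together with the sets
`B(n,i) = {Sum.inl a | a ≥ n} ∪ {Sum.inr i}`. -/
instance : TopologicalSpace XS :=
  .generateFrom
    ((Set.range fun n : ℕ => ({XS.inl n} : Set XS)) ∪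
      (Set.range fun p : ℕ × Bool => (XS.inl '' Set.Ici p.1 ∪ {XS.inr p.2} : Set XS)))

/-- The collection `H` of opens containing `ℕ ∪ {∞₁}` or `ℕ ∪ {∞₂}`. -/
def Hex : Set (Opens XS) :=
  {U : Opens XS | Set.range XS.inl ∪ {XS.inr true} ⊆ (U : Set XS)} ∪
    {U : Opens XS | Set.range XS.inl ∪ {XS.inr false} ⊆ (U : Set XS)}

namespace XS

/-- The basic open set `B(n,i)`: the tail of `ℕ` from `n` on, with the point at infinity `i`. -/
def tail (n : ℕ) (i : Bool) : Set XS := XS.inl '' Set.Ici n ∪ {XS.inr i}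

lemma inl_injective : Function.Injective XS.inl := Sum.inl_injective

lemma inr_injective : Function.Injective XS.inr := Sum.inr_injective

lemma inl_ne_inr (n : ℕ) (b : Bool) : XS.inl n ≠ XS.inr b := Sum.inl_ne_inr

lemma cases_pt (x : XS) : (∃ n, x = XS.inl n) ∨ ∃ b, x = XS.inr b := by
  cases x with
  | inl n => exact Or.inl ⟨n, rfl⟩
  | inr b => exact Or.inr ⟨b, rfl⟩

@[simp] lemma inl_mem_tail {a n : ℕ} {i : Bool} : XS.inl a ∈ tail n i ↔ n ≤ a := by
  simp [tail, inl_ne_inr, inl_injective.eq_iff]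

@[simp] lemma inr_mem_tail {n : ℕ} {b i : Bool} : XS.inr b ∈ tail n i ↔ b = i := by
  simp [tail, inl_ne_inr, inr_injective.eq_iff]

lemma isOpen_singleton_inl (n : ℕ) : IsOpen ({XS.inl n} : Set XS) :=
  .basic _ (Or.inl ⟨n, rfl⟩)

lemma isOpen_tail (n : ℕ) (i : Bool) : IsOpen (tail n i) :=
  .basic _ (Or.inr ⟨(n, i), rfl⟩)

/-- Pointwise description of the topology generated by the singletons and the tails. -/
lemma isOpen_iff {U : Set XS} :
    IsOpen U ↔ ∀ i, XS.inr i ∈ U → ∃ n, ∀ a, n ≤ a → XS.inl a ∈ U := by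
  constructor
  · intro h
    induction h with
    | basic s hs =>
      rcases hs with ⟨n, rfl⟩ | ⟨⟨n, j⟩, rfl⟩
      · intro i hi
        exact absurd hi.symm (inl_ne_inr n i)
      · intro i _
        exact ⟨n, fun a ha => Or.inl ⟨a, ha, rfl⟩⟩
    | univ => exact fun _ _ => ⟨0, fun _ _ => mem_univ _⟩
    | inter s t _ _ ihs iht =>
      intro i hi
      obtain ⟨m, hm⟩ := ihs i hi.1
      obtain ⟨n, hn⟩ := iht i hi.2
      exact ⟨max m n, fun a ha => ⟨hm a (le_of_max_le_left ha), hn a (le_of_max_le_right ha)⟩⟩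
    | sUnion S _ ih =>
      rintro i ⟨s, hs, hi⟩
      obtain ⟨n, hn⟩ := ih s hs i hi
      exact ⟨n, fun a ha => ⟨s, hs, hn a ha⟩⟩
  · intro h
    rw [isOpen_iff_forall_mem_open]
    intro x hx
    rcases cases_pt x with ⟨n, rfl⟩ | ⟨i, rfl⟩
    · exact ⟨_, singleton_subset_iff.2 hx, isOpen_singleton_inl n, rfl⟩
    · obtain ⟨n, hn⟩ := h i hx
      refine ⟨tail n i, ?_, isOpen_tail n i, by simp⟩
      rintro _ (⟨a, ha, rfl⟩ | rfl)
      exacts [hn a ha, hx]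

/-- An open set containing the point at infinity of `B(n,i)` misses only finitely many of its
points. -/
lemma isCompact_tail (n : ℕ) (i : Bool) : IsCompact (tail n i) := by
  refine isCompact_of_finite_subcover fun U hUo hU => ?_
  classical
  obtain ⟨j, hj⟩ := mem_iUnion.1 (hU (inr_mem_tail.2 rfl : XS.inr i ∈ tail n i))
  obtain ⟨m, hm⟩ := isOpen_iff.1 (hUo j) i hj
  have hfin : (XS.inl '' Set.Ico n m).Finite := (Set.finite_Ico n m).image _
  obtain ⟨t, ht⟩ := hfin.isCompact.elim_finite_subcover U hUo (by
    rintro _ ⟨a, ha, rfl⟩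
    exact hU (inl_mem_tail.2 ha.1))
  refine ⟨insert j t, ?_⟩
  rintro _ (⟨a, ha, rfl⟩ | rfl)
  · by_cases ham : a < m
    · obtain ⟨k, hk, hak⟩ := mem_iUnion₂.1 (ht ⟨a, ⟨ha, ham⟩, rfl⟩)
      exact mem_iUnion₂.2 ⟨k, Finset.mem_insert_of_mem hk, hak⟩
    · exact mem_iUnion₂.2 ⟨j, Finset.mem_insert_self _ _, hm a (not_lt.1 ham)⟩
  · exact mem_iUnion₂.2 ⟨j, Finset.mem_insert_self _ _, hj⟩

lemma t1Space : T1Space XS := by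
  refine ⟨fun x => ⟨isOpen_iff.2 fun i _ => ?_⟩⟩
  rcases cases_pt x with ⟨n, rfl⟩ | ⟨j, rfl⟩
  · refine ⟨n + 1, fun a ha h => ?_⟩
    have : a = n := inl_injective h
    omega
  · exact ⟨0, fun a _ h => inl_ne_inr a j h⟩

lemma secondCountableTopology : SecondCountableTopology XS :=
  ⟨_, (countable_range _).union (countable_range _), rfl⟩

lemma locallyCompactSpace : LocallyCompactSpace XS := by
  refine ⟨fun x N hN => ?_⟩
  obtain ⟨U, hUN, hU, hx⟩ := mem_nhds_iff.1 hN
  rcases cases_pt x with ⟨n, rfl⟩ | ⟨i, rfl⟩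
  · exact ⟨{XS.inl n}, (isOpen_singleton_inl n).mem_nhds rfl,
      singleton_subset_iff.2 (hUN hx), isCompact_singleton⟩
  · obtain ⟨n, hn⟩ := isOpen_iff.1 hU i hx
    refine ⟨tail n i, (isOpen_tail n i).mem_nhds (by simp), ?_, isCompact_tail n i⟩
    rintro _ (⟨a, ha, rfl⟩ | rfl)
    exacts [hUN (hn a ha), hUN hx]

lemma tail_zero (i : Bool) : tail 0 i = Set.range XS.inl ∪ {XS.inr i} := by
  have h : Set.Ici 0 = (Set.univ : Set ℕ) := by ext; simp
  rw [tail, h, image_univ]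

end XS

lemma IsCompact.countablyCompactSet {X : Type*} [TopologicalSpace X] {K : Set X}
    (hK : IsCompact K) : CountablyCompactSet K := by
  intro C _ hC hKC
  obtain ⟨F, hFC, hF, hKF⟩ := hK.elim_finite_subcover_image (c := id) hC
    (by simpa only [id, ← sUnion_eq_biUnion] using hKC)
  exact ⟨F, hFC, hF, by simpa only [id, ← sUnion_eq_biUnion] using hKF⟩

lemma Hex_eq : Hex = ⋃₀ {eOpens (XS.tail 0 true), eOpens (XS.tail 0 false)} := by
  rw [sUnion_pair, XS.tail_zero, XS.tail_zero]
  rfl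

lemma mem_Hex_of_tail (i : Bool) : (⟨XS.tail 0 i, XS.isOpen_tail 0 i⟩ : Opens XS) ∈ Hex := by
  rw [Hex_eq, sUnion_pair]
  cases i
  exacts [Or.inr fun _ hx => hx, Or.inl fun _ hx => hx]

lemma iInter_Hex : (⋂ U ∈ Hex, (U : Set XS)) = Set.range XS.inl := by
  refine Subset.antisymm (fun x hx => ?_) (subset_iInter₂ fun U hU => ?_)
  · rw [mem_iInter₂] at hx
    rcases XS.cases_pt x with ⟨n, rfl⟩ | ⟨b, rfl⟩
    · exact ⟨n, rfl⟩
    · have h1 : XS.inr b ∈ XS.tail 0 true := hx _ (mem_Hex_of_tail true)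
      have h2 : XS.inr b ∈ XS.tail 0 false := hx _ (mem_Hex_of_tail false)
      rw [XS.inr_mem_tail] at h1 h2
      exact absurd (h1.symm.trans h2) (by decide)
  · rcases hU with hU | hU
    all_goals exact subset_union_left.trans hU

lemma not_countablyCompactSet_range_inl : ¬ CountablyCompactSet (Set.range XS.inl) := by
  intro h
  obtain ⟨F, hFC, hF, hcov⟩ := h (Set.range fun n => {XS.inl n}) (countable_range _)
    (by rintro _ ⟨n, rfl⟩; exact XS.isOpen_singleton_inl n)
    (by rintro _ ⟨n, rfl⟩; exact ⟨_, ⟨n, rfl⟩, rfl⟩)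
  refine Set.infinite_range_of_injective XS.inl_injective (Set.Finite.subset ?_ hcov)
  refine hF.sUnion fun s hs => ?_
  obtain ⟨n, rfl⟩ := hFC hs
  exact Set.finite_singleton _

/-- The space `XS` is T₁, second countable and locally compact; `Hex` is a
nonempty ω-Scott open collection of opens; `⋂ Hex` is the copy of `ℕ`, which is not countably
compact. Hence sequential Hausdorffness is essential. -/
theorem statement19 :
    T1Space XS ∧ SecondCountableTopology XS ∧ LocallyCompactSpace XS ∧
    Hex.Nonempty ∧ OmegaScottOpen Hex ∧
    (⋂ U ∈ Hex, (U : Set XS)) = Set.range XS.inl ∧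
    ¬ CountablyCompactSet (Set.range XS.inl) := by
  refine ⟨XS.t1Space, XS.secondCountableTopology, XS.locallyCompactSpace,
    ⟨_, mem_Hex_of_tail true⟩, ?_, iInter_Hex, not_countablyCompactSet_range_inl⟩
  rw [Hex_eq]
  refine OO.omegaScottOpen_sUnion ?_
  rintro _ (rfl | rfl)
  all_goals exact omegaScottOpen_eOpens (XS.isCompact_tail 0 _).countablyCompactSet
end
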